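/- arXiv:1812.08339 — 5 statements merged into one kernel-verified Lean document; each statement's English description precedes it below -/
import Mathlib

section
/- (Contraction of the quasi-error) Let C_rel > 0, C_est > 0 and q ∈ (0,1) be real constants, and let e, e★, E, η, η★ be nonnegative real numbers satisfying: (i) e★² ≤ e² − E² (Galerkin Pythagoras), (ii) η★² ≤ q·η² + C_est⁻¹·E² (estimator reduction), and (iii) e² ≤ C_rel·η² (reliability). Set α := (q·C_est + C_rel)/(C_est + C_rel). Then α < 1 and e★² + C_est·η★² ≤ α·(e² + C_est·η²). -/
/-- **Contraction of the quasi-error.**  Arithmetic core of the AFEM convergence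
theorem: given reliability, estimator reduction and Galerkin Pythagoras, the
quasi-error `e² + C_est·η²` contracts with factor
`α = (q·C_est + C_rel)/(C_est + C_rel) < 1`. -/
theorem quasi_error_contraction
    (Crel Cest q : ℝ) (hCrel : 0 < Crel) (hCest : 0 < Cest)
    (hq0 : 0 < q) (hq1 : q < 1)
    (e es E η ηs : ℝ)
    (he : 0 ≤ e) (hes : 0 ≤ es) (hE : 0 ≤ E) (hη : 0 ≤ η) (hηs : 0 ≤ ηs)
    (hPyth : es ^ 2 ≤ e ^ 2 - E ^ 2)
    (hEst : ηs ^ 2 ≤ q * η ^ 2 + Cest⁻¹ * E ^ 2)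
    (hRel : e ^ 2 ≤ Crel * η ^ 2) :
    (q * Cest + Crel) / (Cest + Crel) < 1 ∧
      es ^ 2 + Cest * ηs ^ 2 ≤
        (q * Cest + Crel) / (Cest + Crel) * (e ^ 2 + Cest * η ^ 2) := by
  have hS : 0 < Cest + Crel := by linarith
  refine ⟨?_, ?_⟩
  · rw [div_lt_one hS]
    nlinarith
  · have h1 : Cest * ηs ^ 2 ≤ Cest * q * η ^ 2 + E ^ 2 := by
      have h := mul_le_mul_of_nonneg_left hEst hCest.le
      have h2 : Cest * (q * η ^ 2 + Cest⁻¹ * E ^ 2) = Cest * q * η ^ 2 + E ^ 2 := by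
        field_simp
      linarith
    have h3 : es ^ 2 + Cest * ηs ^ 2 ≤ e ^ 2 + Cest * q * η ^ 2 := by linarith
    refine h3.trans ?_
    rw [div_mul_eq_mul_div, le_div_iff₀ hS]
    have h4 : 0 ≤ (1 - q) * Cest * (Crel * η ^ 2 - e ^ 2) :=
      mul_nonneg (mul_nonneg (by linarith) hCest.le) (by linarith)
    linarith
end

section
/- (Discrete trace inequality for polynomials, with scaling) Fix a natural number m. There exists a constant d > 0, depending only on m, such that for every real h > 0 and every real polynomial q in two variables of total degree at most m, ∫_0^h q(x,0)² dx ≤ d · h⁻¹ · ∫_{[0,h]²} q(x,y)² d(x,y). -/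
open MeasureTheory

lemma poly_trace_unit (m : ℕ) : ∃ d : ℝ, 0 < d ∧ ∀ p : Polynomial ℝ, p.natDegree ≤ m →
    (p.eval 0) ^ 2 ≤ d * ∫ y in (0:ℝ)..1, (p.eval y) ^ 2 := by
  have hint : ∀ p q : Polynomial ℝ,
      IntervalIntegrable (fun y => p.eval y * q.eval y) volume 0 1 := fun p q =>
    (p.continuous.mul q.continuous).intervalIntegrable _ _
  let V := Polynomial.degreeLT ℝ (m + 1)
  have hfd : FiniteDimensional ℝ V :=
    Module.Finite.equiv (Polynomial.degreeLTEquiv ℝ (m + 1)).symm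
  let B : V →ₗ[ℝ] V →ₗ[ℝ] ℝ := LinearMap.mk₂ ℝ
    (fun p q => ∫ y in (0:ℝ)..1, (p : Polynomial ℝ).eval y * (q : Polynomial ℝ).eval y)
    (by
      intro a b c
      rw [← intervalIntegral.integral_add (hint _ _) (hint _ _)]
      congr 1; ext y; simp [add_mul])
    (by
      intro r a c
      rw [smul_eq_mul, ← intervalIntegral.integral_const_mul]
      congr 1; ext y; simp [mul_assoc])
    (by
      intro a b c
      rw [← intervalIntegral.integral_add (hint _ _) (hint _ _)]
      congr 1; ext y; simp [mul_add])
    (by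
      intro r a c
      rw [smul_eq_mul, ← intervalIntegral.integral_const_mul]
      congr 1; ext y; simp [mul_left_comm])
  have hB : ∀ p q : V, B p q = ∫ y in (0:ℝ)..1,
    (p : Polynomial ℝ).eval y * (q : Polynomial ℝ).eval y := fun p q => rfl
  have hinj : Function.Injective B := by
    rw [injective_iff_map_eq_zero]
    intro p hp
    have h0 : B p p = 0 := by rw [hp]; rfl
    rw [hB] at h0
    have hz : ∀ y ∈ Set.Icc (0:ℝ) 1, (p : Polynomial ℝ).eval y = 0 := by
      by_contra! hc
      obtain ⟨y, hy, hne⟩ := hc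
      have := intervalIntegral.integral_pos (a := (0:ℝ)) (b := 1) one_pos
        (f := fun y => (p : Polynomial ℝ).eval y * (p : Polynomial ℝ).eval y)
        ((Polynomial.continuous _).mul (Polynomial.continuous _)).continuousOn
        (fun x _ => mul_self_nonneg _) ⟨y, hy, mul_self_pos.2 hne⟩
      linarith
    apply Subtype.ext
    exact Polynomial.eq_zero_of_infinite_isRoot _
      ((Set.Icc_infinite (zero_lt_one (α := ℝ))).mono fun y hy => hz y hy)
  have hsurj : Function.Surjective B :=
    (LinearMap.injective_iff_surjective_of_finrank_eq_finrank
      (Subspace.dual_finrank_eq (K := ℝ) (V := V)).symm).1 hinj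
  let ev : V →ₗ[ℝ] ℝ := (Polynomial.leval 0).comp V.subtype
  obtain ⟨R, hR⟩ := hsurj ev
  have hC : 0 ≤ B R R := by
    rw [hB]
    exact intervalIntegral.integral_nonneg zero_le_one fun _ _ => mul_self_nonneg _
  refine ⟨B R R + 1, by positivity, fun p hp => ?_⟩
  have hpV : p ∈ V := by
    rw [Polynomial.mem_degreeLT]
    exact lt_of_le_of_lt (Polynomial.degree_le_of_natDegree_le hp)
      (by exact_mod_cast Nat.lt_succ_self m)
  let P : V := ⟨p, hpV⟩
  have hP : (∫ y in (0:ℝ)..1, (p.eval y) ^ 2) = B P P := by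
    rw [hB]; simp only [sq]; rfl
  have hRP : B R P = p.eval 0 := by rw [hR]; rfl
  have hPR : B P R = p.eval 0 := by
    rw [← hRP, hB, hB]; simp only [mul_comm]
  rw [hP]
  set a := p.eval 0
  set C := B R R
  have hs : 0 ≤ B ((C + 1) • P - a • R) ((C + 1) • P - a • R) := by
    rw [hB]
    exact intervalIntegral.integral_nonneg zero_le_one fun _ _ => mul_self_nonneg _
  simp only [map_sub, map_smul, LinearMap.sub_apply, LinearMap.smul_apply, smul_eq_mul,
    hRP, hPR] at hs
  change 0 ≤ _ at hs
  have h2 : 0 ≤ (C + 1) * ((C + 1) * B P P - a ^ 2) := by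
    have : B R R = C := rfl
    rw [this] at hs
    nlinarith [sq_nonneg a]
  have := nonneg_of_mul_nonneg_right h2 (by positivity)
  linarith

lemma poly_trace (m : ℕ) : ∃ d : ℝ, 0 < d ∧ ∀ h : ℝ, 0 < h → ∀ p : Polynomial ℝ,
    p.natDegree ≤ m →
    (p.eval 0) ^ 2 ≤ d * h⁻¹ * ∫ y in Set.Icc (0:ℝ) h, (p.eval y) ^ 2 := by
  obtain ⟨d, hd, H⟩ := poly_trace_unit m
  refine ⟨d, hd, fun h hh p hp => ?_⟩
  have h1 := H (p.comp (Polynomial.C h * Polynomial.X)) (by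
    refine Polynomial.natDegree_comp_le.trans ?_
    rw [Polynomial.natDegree_C_mul_X _ hh.ne', mul_one]; exact hp)
  simp only [Polynomial.eval_comp, Polynomial.eval_mul, Polynomial.eval_C, Polynomial.eval_X,
    mul_zero] at h1
  rw [intervalIntegral.integral_comp_mul_left (fun y => (p.eval y) ^ 2) hh.ne', mul_zero, mul_one,
    smul_eq_mul, intervalIntegral.integral_of_le hh.le, ← integral_Icc_eq_integral_Ioc,
    ← mul_assoc] at h1
  exact h1

/-- **Discrete trace inequality for polynomials, with scaling.**  There is a
constant `d > 0`, depending only on `m`, such that for every `h > 0` and every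
bivariate real polynomial `q` of total degree at most `m`,
`∫_0^h q(x,0)² dx ≤ d · h⁻¹ · ∫_{[0,h]²} q²`. -/
theorem discrete_trace_inequality (m : ℕ) :
    ∃ d : ℝ, 0 < d ∧ ∀ h : ℝ, 0 < h → ∀ q : MvPolynomial (Fin 2) ℝ,
      q.totalDegree ≤ m →
      (∫ x in Set.Icc (0:ℝ) h, (MvPolynomial.eval ![x, 0] q) ^ 2)
        ≤ d * h⁻¹ * ∫ p in Set.Icc (0:ℝ) h ×ˢ Set.Icc (0:ℝ) h,
            (MvPolynomial.eval ![p.1, p.2] q) ^ 2 := by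
  obtain ⟨d, hd, H⟩ := poly_trace m
  refine ⟨d, hd, fun h hh q hq => ?_⟩
  have hev : ∀ x y : ℝ, (MvPolynomial.aeval ![Polynomial.C x, Polynomial.X] q).eval y
      = MvPolynomial.eval ![x, y] q := by
    intro x y
    rw [← Polynomial.coe_evalRingHom, MvPolynomial.aeval_def, MvPolynomial.hom_eval₂]
    rw [MvPolynomial.eval, MvPolynomial.coe_eval₂Hom]
    congr 1
    · ext; simp
    · ext i; fin_cases i <;> simp
  have hcont : Continuous fun p : ℝ × ℝ => (MvPolynomial.eval ![p.1, p.2] q) ^ 2 := by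
    refine (Continuous.comp (MvPolynomial.continuous_eval q) ?_).pow 2
    refine continuous_pi fun i => ?_
    fin_cases i <;> simp <;> fun_prop
  have hI : IntegrableOn (fun p : ℝ × ℝ => (MvPolynomial.eval ![p.1, p.2] q) ^ 2)
      (Set.Icc (0:ℝ) h ×ˢ Set.Icc (0:ℝ) h) (volume.prod volume) :=
    hcont.continuousOn.integrableOn_compact (μ := volume) (isCompact_Icc.prod isCompact_Icc)
  rw [Measure.volume_eq_prod, setIntegral_prod _ hI, ← integral_const_mul]
  refine integral_mono ?_ ?_ fun x => ?_
  · exact (hcont.comp (f := fun x : ℝ => (x, (0:ℝ))) (by fun_prop)).continuousOn.integrableOn_compact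
      isCompact_Icc
  · rw [IntegrableOn, ← Measure.prod_restrict] at hI
    exact hI.integral_prod_left.const_mul _
  · have := H h hh (MvPolynomial.aeval ![Polynomial.C x, Polynomial.X] q) (by
      have := MvPolynomial.aeval_natDegree_le q hq
        (![Polynomial.C x, Polynomial.X] : Fin 2 → Polynomial ℝ) (n := 1)
        (by intro i; fin_cases i <;> simp)
      simpa using this)
    simpa only [hev] using this
end

section
/- (Partition of unity for cardinal B-splines) For every natural number k and every x ∈ ℝ, the integer translates of the cardinal B-spline b^k sum to one: ∑_{j ∈ ℤ} b^k(x − j) = 1 (the sum has only finitely many nonzero terms). -/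
open MeasureTheory

/-- The cardinal B-spline of degree `k`, defined recursively by
`b⁰ = 1_{[0,1)}` and `b^k(x) = ∫₀¹ b^{k-1}(x - t) dt`. -/
noncomputable def cardB : ℕ → ℝ → ℝ
  | 0 => Set.indicator (Set.Ico (0:ℝ) 1) (fun _ => (1:ℝ))
  | k + 1 => fun x => ∫ t in (0:ℝ)..1, cardB k (x - t)

theorem cardB_supp (k : ℕ) : ∀ x : ℝ, (x < 0 ∨ (k:ℝ) + 1 < x) → cardB k x = 0 := by
  induction k with
  | zero =>
    intro x hx
    simp only [cardB]
    apply Set.indicator_of_notMem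
    rintro ⟨h1, h2⟩
    rcases hx with h | h
    · linarith
    · norm_num at h; linarith
  | succ k ih =>
    intro x hx
    simp only [cardB]
    have : ∀ t ∈ Set.uIcc (0:ℝ) 1, cardB k (x - t) = (fun _ => (0:ℝ)) t := by
      intro t ht
      rw [Set.uIcc_of_le zero_le_one] at ht
      apply ih
      push_cast at hx
      rcases hx with h | h
      · left; linarith [ht.1]
      · right; linarith [ht.2]
    rw [intervalIntegral.integral_congr this]
    simp

theorem cardB_intervalIntegrable (k : ℕ) :
    ∀ a b : ℝ, IntervalIntegrable (cardB k) volume a b := by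
  induction k with
  | zero =>
    intro a b
    simp only [cardB]
    have h : Integrable (Set.indicator (Set.Ico (0:ℝ) 1) (fun _ => (1:ℝ))) volume := by
      rw [integrable_indicator_iff measurableSet_Ico]
      exact integrableOn_const (by simp) (by simp)
    exact h.intervalIntegrable
  | succ k ih =>
    intro a b
    apply Continuous.intervalIntegrable
    have hc := intervalIntegral.continuous_primitive ih 0
    have : cardB (k+1) = fun x => (∫ t in (0:ℝ)..x, cardB k t) - ∫ t in (0:ℝ)..(x-1), cardB k t := by
      funext x
      simp only [cardB]
      rw [intervalIntegral.integral_comp_sub_left (fun t => cardB k t) x,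
        intervalIntegral.integral_interval_sub_left (ih _ _) (ih _ _), sub_zero]
    rw [this]
    exact hc.sub (hc.comp (continuous_id.sub continuous_const))

theorem cardB_zero_of_notMem (k : ℕ) (x y : ℝ) (h1 : x - 1 ≤ y) (h2 : y ≤ x) (j : ℤ)
    (hj : j ∉ Finset.Icc (⌊x⌋ - k - 3) (⌊x⌋ + 3)) : cardB k (y - j) = 0 := by
  apply cardB_supp
  have a := Int.floor_le x
  have b := Int.lt_floor_add_one x
  rw [Finset.mem_Icc, not_and_or, not_le, not_le] at hj
  rcases hj with h | h
  · right
    have : (j:ℝ) < (⌊x⌋:ℝ) - k - 3 := by exact_mod_cast h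
    linarith
  · left
    have : (⌊x⌋:ℝ) + 3 < j := by exact_mod_cast h
    linarith

theorem cardB_tsum (k : ℕ) : ∀ x : ℝ, (∑' j : ℤ, cardB k (x - j)) = 1 := by
  induction k with
  | zero =>
    intro x
    rw [tsum_eq_single ⌊x⌋]
    · simp only [cardB]
      apply Set.indicator_of_mem
      exact ⟨by linarith [Int.floor_le x], by linarith [Int.lt_floor_add_one x]⟩
    · intro j hj
      simp only [cardB]
      apply Set.indicator_of_notMem
      rintro ⟨h1, h2⟩
      apply hj
      symm
      rw [Int.floor_eq_iff]
      constructor <;> linarith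
  | succ k ih =>
    intro x
    have hS : ∀ j ∉ Finset.Icc (⌊x⌋ - (k+1:ℕ) - 3) (⌊x⌋ + 3), cardB (k+1) (x - j) = 0 :=
      fun j hj => cardB_zero_of_notMem (k+1) x x (by linarith) le_rfl j hj
    rw [tsum_eq_sum hS]
    simp only [cardB]
    rw [← intervalIntegral.integral_finsetSum]
    · have : ∀ t ∈ Set.uIcc (0:ℝ) 1,
          (∑ j ∈ Finset.Icc (⌊x⌋ - (k+1:ℕ) - 3) (⌊x⌋ + 3), cardB k (x - j - t))
            = (fun _ => (1:ℝ)) t := by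
        intro t ht
        rw [Set.uIcc_of_le zero_le_one] at ht
        show _ = (1:ℝ)
        rw [← ih (x - t), tsum_eq_sum]
        · apply Finset.sum_congr rfl
          intro j _
          congr 1
          ring
        · intro j hj
          apply cardB_zero_of_notMem k x (x - t) (by linarith [ht.2]) (by linarith [ht.1])
          intro h
          apply hj
          rw [Finset.mem_Icc] at h ⊢
          push_cast
          constructor <;> linarith [h.1, h.2]
      rw [intervalIntegral.integral_congr this]
      simp
    · intro j _
      have := (cardB_intervalIntegrable k (x - j - 0) (x - j - 1)).comp_sub_left (x - j)
      simpa using this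

/-- **Partition of unity for cardinal B-splines.**  For every `k` and every
`x ∈ ℝ`, only finitely many integer translates `b^k(x - j)` are nonzero and
they sum to one: `∑_{j ∈ ℤ} b^k(x - j) = 1`. -/
theorem cardB_partition_of_unity (k : ℕ) (x : ℝ) :
    {j : ℤ | cardB k (x - j) ≠ 0}.Finite ∧
      (∑' j : ℤ, cardB k (x - j)) = 1 := by
  refine ⟨?_, cardB_tsum k x⟩
  apply (Finset.Icc (⌊x⌋ - (k:ℤ) - 3) (⌊x⌋ + 3)).finite_toSet.subset
  intro j hj
  by_contra h
  exact hj (cardB_zero_of_notMem k x x (by linarith) le_rfl j h)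
end

section
/- (Smoothness of cardinal B-splines) For every natural number k ≥ 1, the cardinal B-spline b^k is (k−1)-times continuously differentiable on ℝ. -/
open MeasureTheory

lemma cardB_succ_eq (k : ℕ) (h : ∀ a b : ℝ, IntervalIntegrable (cardB k) volume a b) :
    cardB (k + 1) = fun x => (∫ t in (0:ℝ)..x, cardB k t) - ∫ t in (0:ℝ)..(x - 1), cardB k t := by
  funext x
  rw [intervalIntegral.integral_interval_sub_left (h _ _) (h _ _)]
  simp only [cardB]
  rw [intervalIntegral.integral_comp_sub_left (fun t => cardB k t) x]
  simp

lemma cardB_zero_integrable (a b : ℝ) : IntervalIntegrable (cardB 0) volume a b := by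
  have : Integrable (cardB 0) volume := by
    unfold cardB
    exact (integrable_indicator_iff measurableSet_Ico).2 (integrableOn_const (by simp))
  exact this.intervalIntegrable

lemma cardB_succ_contDiff (k : ℕ) : ContDiff ℝ (k : ℕ∞) (cardB (k + 1)) := by
  induction k with
  | zero =>
    rw [cardB_succ_eq 0 cardB_zero_integrable]
    have hc : Continuous fun x => ∫ t in (0:ℝ)..x, cardB 0 t :=
      intervalIntegral.continuous_primitive cardB_zero_integrable 0
    have := hc.sub (hc.comp (continuous_id.sub continuous_const : Continuous fun x : ℝ => x - 1))
    exact contDiff_zero.2 this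
  | succ k ih =>
    have hcont : Continuous (cardB (k + 1)) := ih.continuous
    rw [cardB_succ_eq (k + 1) (fun a b => hcont.intervalIntegrable a b)]
    have hF : ContDiff ℝ ((k + 1 : ℕ) : ℕ∞) fun x => ∫ t in (0:ℝ)..x, cardB (k + 1) t := by
      have hd : ∀ x, HasDerivAt (fun x => ∫ t in (0:ℝ)..x, cardB (k + 1) t) (cardB (k + 1) x) x :=
        fun x => hcont.integral_hasStrictDerivAt 0 x |>.hasDerivAt
      have he : (((k + 1 : ℕ) : ℕ∞) : WithTop ℕ∞) = ((k : ℕ∞) : WithTop ℕ∞) + 1 := by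
        norm_cast
      rw [he, contDiff_succ_iff_deriv]
      refine ⟨fun x => (hd x).differentiableAt, by simp, ?_⟩
      rw [show deriv (fun x => ∫ t in (0:ℝ)..x, cardB (k + 1) t) = cardB (k + 1) from
        funext fun x => (hd x).deriv]
      exact ih
    exact hF.sub (hF.comp (contDiff_id.sub contDiff_const : ContDiff ℝ _ fun x : ℝ => x - 1))

/-- **Smoothness of cardinal B-splines.**  For every `k ≥ 1`, the cardinal
B-spline `b^k` is `(k-1)`-times continuously differentiable on `ℝ`. -/
theorem cardB_contDiff (k : ℕ) (hk : 1 ≤ k) :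
    ContDiff ℝ ((k - 1 : ℕ) : ℕ∞) (cardB k) := by
  obtain ⟨n, rfl⟩ := Nat.exists_eq_add_of_le' hk
  simpa using cardB_succ_contDiff n
end

section
/- (Functions with vanishing m-th differences are polynomials) Let m ≥ 1 be a natural number and let f : ℝ → ℝ be continuous. If (Δ_h^m f)(x) = 0 for every h > 0 and every x ∈ ℝ, then f coincides with a real polynomial of degree at most m − 1. -/
/-- The forward difference operator `(Δ_h f)(x) = f (x + h) - f x`. -/
def fwdDiffOp (h : ℝ) (f : ℝ → ℝ) : ℝ → ℝ := fun x => f (x + h) - f x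

lemma lattice_zero (m : ℕ) (g : ℝ → ℝ) (h y : ℝ) (hg : (fwdDiff h)^[m] g = 0)
    (h0 : ∀ k < m, g (y + k * h) = 0) (n : ℕ) : g (y + n * h) = 0 := by
  have := shift_eq_sum_fwdDiff_iter h g n y
  rw [nsmul_eq_mul] at this
  rw [this]
  apply Finset.sum_eq_zero
  intro k _
  have hk : (fwdDiff h)^[k] g y = 0 := by
    rcases lt_or_ge k m with hkm | hkm
    · rw [fwdDiff_iter_eq_sum_shift]
      apply Finset.sum_eq_zero
      intro j hj
      rw [nsmul_eq_mul, h0 j (by have := Finset.mem_range.1 hj; omega), smul_zero]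
    · obtain ⟨d, rfl⟩ := Nat.exists_eq_add_of_le' hkm
      rw [Function.iterate_add_apply, hg]
      have : ∀ d : ℕ, (fwdDiff h)^[d] (0 : ℝ → ℝ) = 0 := by
        intro d
        apply Function.iterate_fixed
        exact fwdDiff_const h (0 : ℝ)
      rw [this]; rfl
  rw [hk, smul_zero]

lemma lattice_poly (m : ℕ) (hm : 1 ≤ m) (f : ℝ → ℝ) (h y : ℝ) (hh : 0 < h)
    (hf : (fwdDiff h)^[m] f = 0) :
    ∃ q : Polynomial ℝ, q.degree < m ∧ ∀ n : ℕ, f (y + n * h) = q.eval (y + n * h) := by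
  have hinj : Set.InjOn (fun k : ℕ => y + k * h) (Finset.range m : Set ℕ) := by
    intro a _ b _ hab
    have : (a : ℝ) * h = b * h := add_left_cancel hab
    exact_mod_cast mul_right_cancel₀ hh.ne' this
  set q := Lagrange.interpolate (Finset.range m) (fun k : ℕ => y + k * h)
    (fun k : ℕ => f (y + k * h)) with hq
  have hdeg : q.degree < m := by
    have := Lagrange.degree_interpolate_lt (fun k : ℕ => f (y + k * h)) hinj
    rwa [Finset.card_range] at this
  refine ⟨q, hdeg, fun n => ?_⟩
  have hqd : q.natDegree < m := by
    by_cases h0 : q = 0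
    · rw [h0, Polynomial.natDegree_zero]; omega
    · exact (Polynomial.natDegree_lt_iff_degree_lt h0).2 hdeg
  have key := lattice_zero m (f + (-1 : ℝ) • fun x => q.eval x) h y ?_ ?_ n
  · simp at key; linarith
  · rw [fwdDiff_iter_add, fwdDiff_iter_const_smul, hf]
    have : (fwdDiff h)^[m] (fun x => q.eval x) = 0 := by
      have h1 := Polynomial.fwdDiff_iter_eq_zero_of_degree_lt
        (P := q.comp (Polynomial.C h * Polynomial.X)) (n := m)
        (by rw [Polynomial.natDegree_comp, Polynomial.natDegree_C_mul_X _ hh.ne', mul_one]; exact hqd)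
      funext x
      have h2 := congrFun h1 (x / h)
      rw [fwdDiff_iter_eq_sum_shift] at h2 ⊢
      simp only [Pi.zero_apply] at h2 ⊢
      rw [← h2]
      refine Finset.sum_congr rfl fun k _ => ?_
      congr 1
      simp only [Polynomial.eval_comp, Polynomial.eval_mul, Polynomial.eval_C, Polynomial.eval_X]
      congr 1
      simp only [nsmul_eq_mul]
      field_simp
    rw [this]; simp
  · intro k hk
    have := Lagrange.eval_interpolate_at_node (fun k : ℕ => f (y + k * h)) hinj
      (Finset.mem_range.2 hk)
    simp only [Pi.add_apply, Pi.smul_apply, smul_eq_mul]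
    rw [hq, this]; ring

/-- **Functions with vanishing `m`-th differences are polynomials.**  If
`f : ℝ → ℝ` is continuous and `(Δ_h^m f)(x) = 0` for every `h > 0` and every
`x ∈ ℝ` (with `m ≥ 1`), then `f` coincides with a real polynomial of degree at
most `m - 1`. -/
theorem continuous_of_vanishing_fwdDiff_is_polynomial
    (m : ℕ) (hm : 1 ≤ m) (f : ℝ → ℝ) (hf : Continuous f)
    (hvanish : ∀ h : ℝ, 0 < h → ∀ x : ℝ, (fwdDiffOp h)^[m] f x = 0) :
    ∃ p : Polynomial ℝ, p.natDegree ≤ m - 1 ∧ ∀ x : ℝ, f x = p.eval x := by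
  have hv : ∀ h : ℝ, 0 < h → (fwdDiff h)^[m] f = 0 := fun h hh => funext (hvanish h hh)
  obtain ⟨p, hpd, hp⟩ := lattice_poly m hm f 1 0 one_pos (hv 1 one_pos)
  have hp' : ∀ n : ℕ, f n = p.eval (n : ℝ) := by simpa using hp
  refine ⟨p, ?_, ?_⟩
  · by_cases h0 : p = 0
    · rw [h0]; simp
    · have := (Polynomial.natDegree_lt_iff_degree_lt h0).2 hpd
      omega
  · have hrat : ∀ r : ℚ, f r = p.eval (r : ℝ) := by
      intro r
      have hN : (0 : ℝ) < r.den := by exact_mod_cast r.den_pos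
      set M : ℕ := r.num.natAbs with hM
      obtain ⟨q, hqd, hq⟩ := lattice_poly m hm f (1 / (r.den : ℝ)) (-(M : ℝ))
        (by positivity) (hv _ (by positivity))
      have hpq : q = p := by
        refine Polynomial.eq_of_degrees_lt_of_eval_index_eq (Finset.range m)
          (v := fun k : ℕ => (k : ℝ)) (fun a _ b _ hab => Nat.cast_injective hab)
          (by simpa using hqd) (by simpa using hpd) ?_
        intro k _
        have h1 := hq ((M + k) * r.den)
        have h2 : -(M : ℝ) + (((M + k) * r.den : ℕ) : ℝ) * (1 / (r.den : ℝ)) = k := by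
          push_cast; field_simp; ring
        rw [h2] at h1
        rw [← h1, hp']
      have hnn : 0 ≤ r.num + M * r.den := by
        have h1 : (1 : ℤ) ≤ r.den := by exact_mod_cast r.den_pos
        have h2 : -(M : ℤ) ≤ r.num := by omega
        nlinarith [Int.natCast_nonneg M]
      obtain ⟨n, hn⟩ := Int.eq_ofNat_of_zero_le hnn
      have h1 := hq n
      have h2 : -(M : ℝ) + (n : ℝ) * (1 / (r.den : ℝ)) = r := by
        have h3 : (n : ℝ) = r.num + M * r.den := by exact_mod_cast hn.symm
        rw [h3, Rat.cast_def]; field_simp; ring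
      rw [h2, hpq] at h1
      exact h1
    have := Continuous.ext_on Rat.denseRange_cast hf p.continuous (by
      rintro _ ⟨r, rfl⟩; exact hrat r)
    exact fun x => congrFun this x
end
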